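/- Let t ↦ X(t) be a continuous map from [0,1] into the space of r × r complex matrices. Then there exist continuous functions λ_1(t),…,λ_r(t) on [0,1] such that for each t ∈ [0,1], the numbers λ_1(t),…,λ_r(t) are the eigenvalues of X(t) counted with algebraic multiplicity. -/

import Mathlib

open Filter Topology

/-- Root tuples at nearby parameters can be matched uniformly. -/
theorem aux_match {r : ℕ} (R : ℝ → (Fin r → ℂ) → Prop)
    (hex : ∀ t, ∃ a, R t a)
    (hcl : IsClosed {p : ℝ × (Fin r → ℂ) | R p.1 p.2})
    (M : ℝ) (hM : ∀ t a, R t a → ‖a‖ ≤ M)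
    (hperm : ∀ t a b, R t a → R t b → ∃ σ : Equiv.Perm (Fin r), b ∘ σ = a)
    (hsymm : ∀ t b (σ : Equiv.Perm (Fin r)), R t b → R t (b ∘ σ))
    (ε : ℝ) (hε : 0 < ε) :
    ∃ δ > 0, ∀ s ∈ Set.Icc (0:ℝ) 1, ∀ t ∈ Set.Icc (0:ℝ) 1, |s - t| < δ → ∀ a, R s a →
      ∃ b, R t b ∧ dist a b < ε := by
  by_contra! hcon
  have h1 : ∀ n : ℕ, ∃ q : (ℝ × (Fin r → ℂ)) × (ℝ × (Fin r → ℂ)),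
      q ∈ (Set.Icc (0:ℝ) 1 ×ˢ Metric.closedBall 0 M) ×ˢ (Set.Icc (0:ℝ) 1 ×ˢ Metric.closedBall 0 M)
      ∧ |q.1.1 - q.2.1| < 1 / ((n:ℝ) + 1) ∧ R q.1.1 q.1.2 ∧ R q.2.1 q.2.2 ∧
      ∀ b, R q.2.1 b → ε ≤ dist q.1.2 b := by
    intro n
    obtain ⟨s, hs, t, ht, hst, a, ha, hb⟩ := hcon (1 / ((n:ℝ) + 1)) (by positivity)
    obtain ⟨b, hb'⟩ := hex t
    refine ⟨((s, a), (t, b)), ?_, hst, ha, hb', hb⟩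
    simp only [Set.mem_prod, mem_closedBall_zero_iff]
    exact ⟨⟨hs, hM _ _ ha⟩, ht, hM _ _ hb'⟩
  choose q hqK hqd hq1 hq2 hqb using h1
  have hK : IsCompact ((Set.Icc (0:ℝ) 1 ×ˢ Metric.closedBall (0 : Fin r → ℂ) M) ×ˢ
      (Set.Icc (0:ℝ) 1 ×ˢ Metric.closedBall (0 : Fin r → ℂ) M)) :=
    (isCompact_Icc.prod (isCompact_closedBall _ _)).prod
      (isCompact_Icc.prod (isCompact_closedBall _ _))
  obtain ⟨⟨⟨s, a⟩, ⟨t, b⟩⟩, -, φ, hφ, hlim⟩ := hK.tendsto_subseq hqK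
  have l1 := (continuous_fst.tendsto _).comp hlim
  have l2 := (continuous_snd.tendsto _).comp hlim
  have ls := (continuous_fst.tendsto _).comp l1
  have la := (continuous_snd.tendsto _).comp l1
  have lt := (continuous_fst.tendsto _).comp l2
  have lb := (continuous_snd.tendsto _).comp l2
  have hRa : R s a := hcl.mem_of_tendsto l1 (Eventually.of_forall fun n => hq1 _)
  have hRb : R t b := hcl.mem_of_tendsto l2 (Eventually.of_forall fun n => hq2 _)
  have hst : s = t := by
    have h0 : Tendsto (fun n => 1 / ((φ n : ℝ) + 1)) atTop (𝓝 0) :=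
      tendsto_one_div_add_atTop_nhds_zero_nat.comp hφ.tendsto_atTop
    have h2 : |s - t| ≤ 0 := le_of_tendsto_of_tendsto ((ls.sub lt).abs) h0
      (Eventually.of_forall fun n => (hqd _).le)
    exact sub_eq_zero.1 (abs_nonpos_iff.1 h2)
  subst hst
  obtain ⟨σ, hσ⟩ := hperm _ _ _ hRa hRb
  have lbσ : Tendsto (fun n => (q (φ n)).2.2 ∘ σ) atTop (𝓝 a) := by
    rw [← hσ]
    have hc : Continuous (fun b : Fin r → ℂ => b ∘ σ) := by fun_prop
    exact (hc.tendsto b).comp lb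
  have h3 : ε ≤ dist a a := ge_of_tendsto (la.dist lbσ)
    (Eventually.of_forall fun n => hqb (φ n) _ (hsymm _ _ σ (hq2 _)))
  rw [dist_self] at h3
  linarith

/-- A walk in the `3ε`-graph on a finite family moves a bounded distance. -/
theorem aux_walk {r : ℕ} (a : Fin r → ℂ) (ε : ℝ) (hε : 0 < ε) (x : ℕ → ℂ) (m n : ℕ) (hmn : m ≤ n)
    (hstep : ∀ k, dist (x k) (x (k+1)) < ε)
    (hnear : ∀ k, m ≤ k → k ≤ n → ∃ j, dist (x k) (a j) < ε) :
    dist (x m) (x n) ≤ (3 * r + 2) * ε := by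
  let G : SimpleGraph (Fin r) :=
    { Adj := fun i j => i ≠ j ∧ dist (a i) (a j) < 3 * ε
      symm := ⟨fun i j h => ⟨h.1.symm, by rw [dist_comm]; exact h.2⟩⟩
      loopless := ⟨fun i h => h.1 rfl⟩ }
  have hw : ∀ i j (w : G.Walk i j), dist (a i) (a j) ≤ w.length * (3 * ε) := by
    intro i j w
    induction w with
    | nil => simp
    | @cons u v w h p ih =>
      have h2 := h.2
      have := dist_triangle (a u) (a v) (a w)
      rw [SimpleGraph.Walk.length_cons]
      push_cast
      linarith
  obtain ⟨i, hi⟩ := hnear m le_rfl hmn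
  have hreach : ∀ k, m ≤ k → k ≤ n → ∃ j, dist (x k) (a j) < ε ∧ G.Reachable i j := by
    intro k hk
    induction k, hk using Nat.le_induction with
    | base => exact fun _ => ⟨i, hi, SimpleGraph.Reachable.refl _⟩
    | succ k hk ih =>
      intro hkn
      obtain ⟨j, hj, hr⟩ := ih (by omega)
      obtain ⟨l, hl⟩ := hnear (k+1) (by omega) hkn
      refine ⟨l, hl, ?_⟩
      by_cases hjl : j = l
      · exact hjl ▸ hr
      · refine hr.trans (SimpleGraph.Adj.reachable ⟨hjl, ?_⟩)
        have h1 := dist_triangle4 (a j) (x k) (x (k+1)) (a l)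
        have h2 := hstep k
        rw [dist_comm (a j) (x k)] at h1
        linarith
  obtain ⟨j, hj, hr⟩ := hreach n hmn le_rfl
  obtain ⟨p, hp⟩ := hr.exists_isPath
  have h1 := hw _ _ p
  have h2 := hp.length_lt
  rw [Fintype.card_fin] at h2
  have h3 : (p.length : ℝ) ≤ r := by exact_mod_cast h2.le
  have h4 := dist_triangle4 (x m) (a i) (a j) (x n)
  rw [dist_comm (a j)] at h4
  nlinarith

/-- Abstract continuous selection. -/
theorem aux_select {r : ℕ} (R : ℝ → (Fin r → ℂ) → Prop)
    (hex : ∀ t, ∃ a, R t a)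
    (hcl : IsClosed {p : ℝ × (Fin r → ℂ) | R p.1 p.2})
    (M : ℝ) (hM : ∀ t a, R t a → ‖a‖ ≤ M)
    (hperm : ∀ t a b, R t a → R t b → ∃ σ : Equiv.Perm (Fin r), b ∘ σ = a)
    (hA : ∀ ε > 0, ∃ δ > 0, ∀ s t, |s - t| < δ → ∀ a, R s a → ∃ b, R t b ∧ dist a b < ε) :
    ∃ L : ℝ → Fin r → ℂ, ContinuousOn L (Set.Icc 0 1) ∧ ∀ t ∈ Set.Icc (0:ℝ) 1, R t (L t) := by
  have hseq : ∀ m : ℕ, ∃ (N : ℕ) (y : ℕ → Fin r → ℂ), m + 1 ≤ N ∧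
      (∀ k : ℕ, R ((k:ℝ) / N) (y k)) ∧ ∀ k, dist (y k) (y (k+1)) < 1 / ((m:ℝ) + 1) := by
    intro m
    obtain ⟨δ, hδ, h⟩ := hA (1 / ((m:ℝ) + 1)) (by positivity)
    obtain ⟨N0, hN0⟩ := exists_nat_gt (1 / δ)
    let N := max N0 (m + 1)
    have hN1 : m + 1 ≤ N := le_max_right _ _
    have hN2 : 1 / δ < N := lt_of_lt_of_le hN0 (by exact_mod_cast le_max_left _ _)
    have hNpos : (0:ℝ) < N := by
      have : 0 < N := by omega
      exact_mod_cast this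
    have hs : ∀ (k : ℕ) (a : Fin r → ℂ), ∃ b, R ((k:ℝ) / N) a →
        (R (((k+1 : ℕ):ℝ) / N) b ∧ dist a b < 1 / ((m:ℝ) + 1)) := by
      intro k a
      by_cases hRa : R ((k:ℝ) / N) a
      · obtain ⟨b, hb⟩ := h ((k:ℝ) / N) (((k+1 : ℕ):ℝ) / N) (by
          have : (k:ℝ) / N - ((k+1 : ℕ):ℝ) / N = - (1 / N) := by push_cast; ring
          rw [this, abs_neg, abs_of_pos (by positivity)]
          rw [div_lt_iff₀ hδ] at hN2
          rw [div_lt_iff₀ hNpos]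
          linarith) a hRa
        exact ⟨b, fun _ => hb⟩
      · exact ⟨a, fun h => absurd h hRa⟩
    choose f hf using hs
    obtain ⟨a0, ha0⟩ := hex (((0:ℕ):ℝ) / N)
    let y : ℕ → Fin r → ℂ := fun k => Nat.rec a0 f k
    have hy : ∀ k : ℕ, R ((k:ℝ) / N) (y k) := by
      intro k
      induction k with
      | zero => exact ha0
      | succ k ih => exact (hf k _ ih).1
    exact ⟨N, y, hN1, hy, fun k => (hf k _ (hy k)).2⟩
  choose N y hN hy hstep using hseq
  let g : ℕ → ℝ → ℝ := fun m t => (⌊t * N m⌋₊ : ℝ) / N m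
  let lam : ℕ → ℝ → Fin r → ℂ := fun m t => y m ⌊t * N m⌋₊
  have hNpos : ∀ m, (0:ℝ) < N m := fun m => by
    have := hN m
    have : 0 < N m := by omega
    exact_mod_cast this
  have hNinv : ∀ m, 1 / (N m : ℝ) ≤ 1 / ((m:ℝ) + 1) := fun m =>
    one_div_le_one_div_of_le (by positivity) (by exact_mod_cast hN m)
  have hg : ∀ m t, 0 ≤ t → |g m t - t| ≤ 1 / ((m:ℝ) + 1) := by
    intro m t ht
    refine le_trans ?_ (hNinv m)
    have h0 := hNpos m
    have h1 := Nat.floor_le (mul_nonneg ht h0.le)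
    have h2 := Nat.lt_floor_add_one (t * N m)
    have h3 : g m t - t = ((⌊t * N m⌋₊ : ℝ) - t * N m) / N m := by
      simp only [g]; field_simp
    rw [h3, abs_div, abs_of_pos h0]
    apply div_le_div_of_nonneg_right _ h0.le
    rw [abs_le]; constructor <;> linarith
  have hlamR : ∀ m t, R (g m t) (lam m t) := fun m t => hy m _
  let U : Ultrafilter ℕ := hyperfilter ℕ
  have hU : (U : Filter ℕ) ≤ atTop := by
    rw [← Nat.cofinite_eq_atTop]; exact hyperfilter_le_cofinite
  have hLex : ∀ t, ∃ l, Tendsto (fun m => lam m t) U (𝓝 l) := by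
    intro t
    obtain ⟨l, -, hl⟩ := (isCompact_closedBall (0 : Fin r → ℂ) M).ultrafilter_le_nhds
      (U.map (fun m => lam m t)) (by
        have : ∀ m, lam m t ∈ Metric.closedBall (0 : Fin r → ℂ) M := fun m => by
          simpa using hM _ _ (hlamR m t)
        exact tendsto_principal.2 (Eventually.of_forall this))
    exact ⟨l, hl⟩
  choose L hL using hLex
  have h0 : Tendsto (fun m : ℕ => 1 / ((m : ℝ) + 1)) U (𝓝 0) :=
    tendsto_one_div_add_atTop_nhds_zero_nat.mono_left hU
  refine ⟨L, ?_, ?_⟩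
  · have key : ∀ ε > 0, ∃ δ > 0, ∀ s t, 0 ≤ s → s ≤ t → t - s < δ →
        dist (L s) (L t) ≤ (3 * r + 2) * ε := by
      intro ε hε
      obtain ⟨δ, hδ, h⟩ := hA ε hε
      refine ⟨δ / 2, by positivity, fun s t hs hst hd => ?_⟩
      refine le_of_tendsto ((hL s).dist (hL t)) ?_
      filter_upwards [h0.eventually (gt_mem_nhds hε),
        h0.eventually (gt_mem_nhds (show 0 < δ / 4 by positivity))] with m hm1 hm2
      have hfl : ⌊s * N m⌋₊ ≤ ⌊t * N m⌋₊ :=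
        Nat.floor_mono (mul_le_mul_of_nonneg_right hst (hNpos m).le)
      have hg1 := abs_le.1 (hg m s hs)
      have hg2 := abs_le.1 (hg m t (hs.trans hst))
      rw [dist_pi_le_iff (by positivity)]
      intro i
      refine aux_walk (lam m s) ε hε (fun k => y m k i) _ _ hfl ?_ ?_
      · intro k
        exact lt_of_le_of_lt (dist_le_pi_dist _ _ i) ((hstep m k).trans hm1)
      · intro k hk1 hk2
        have e1 : g m s ≤ (k:ℝ) / N m :=
          div_le_div_of_nonneg_right (by exact_mod_cast hk1) (hNpos m).le
        have e2 : (k:ℝ) / N m ≤ g m t :=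
          div_le_div_of_nonneg_right (by exact_mod_cast hk2) (hNpos m).le
        obtain ⟨b, hb, hdb⟩ := h (g m s) ((k:ℝ) / N m) (by
          rw [abs_lt]; constructor <;> linarith [hg1.1, hg1.2, hg2.1, hg2.2]) _ (hlamR m s)
        obtain ⟨σ, hσ⟩ := hperm _ _ _ (hy m k) hb
        refine ⟨σ i, ?_⟩
        rw [← hσ, dist_comm]
        exact lt_of_le_of_lt (dist_le_pi_dist _ _ (σ i)) hdb
    rw [Metric.continuousOn_iff]
    intro t ht ε hε
    obtain ⟨δ, hδ, h⟩ := key (ε / (2 * (3 * r + 2))) (by positivity)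
    have he : (3 * (r:ℝ) + 2) * (ε / (2 * (3 * r + 2))) = ε / 2 := by field_simp
    refine ⟨δ, hδ, fun s hs hst => ?_⟩
    rw [Real.dist_eq, abs_lt] at hst
    rcases le_total s t with hle | hle
    · have := h s t hs.1 hle (by linarith [hst.1])
      linarith
    · have := h t s ht.1 hle (by linarith [hst.2])
      rw [dist_comm]
      linarith
  · intro t ht
    have hgt : Tendsto (fun m => g m t) U (𝓝 t) := by
      rw [tendsto_iff_dist_tendsto_zero]
      exact squeeze_zero (fun _ => dist_nonneg) (fun m => hg m t ht.1) h0
    exact hcl.mem_of_tendsto (hgt.prodMk_nhds (hL t)) (Eventually.of_forall fun m => hlamR m t)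

section bound
attribute [local instance] Matrix.linftyOpNormedRing Matrix.linftyOpNormedAlgebra

theorem aux_bound {r : ℕ} (Y : ℝ → Matrix (Fin r) (Fin r) ℂ) (hY : Continuous Y) :
    ∃ M : ℝ, ∀ t ∈ Set.Icc (0:ℝ) 1, ∀ a : Fin r → ℂ,
      (Y t).charpoly = ∏ i : Fin r, (Polynomial.X - Polynomial.C (a i)) → ‖a‖ ≤ M := by
  obtain ⟨C, hC⟩ := isCompact_Icc.exists_bound_of_continuousOn
    (f := Y) (s := Set.Icc (0:ℝ) 1) hY.continuousOn
  have hC0 : 0 ≤ C := (norm_nonneg _).trans (hC 0 (by simp))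
  refine ⟨C * ‖(1 : Matrix (Fin r) (Fin r) ℂ)‖, fun t ht a ha => ?_⟩
  rw [pi_norm_le_iff_of_nonneg (by positivity)]
  intro i
  have : a i ∈ spectrum ℂ (Y t) := by
    rw [Matrix.mem_spectrum_iff_isRoot_charpoly, ha, Polynomial.IsRoot, Polynomial.eval_prod]
    exact Finset.prod_eq_zero (Finset.mem_univ i) (by simp)
  exact (spectrum.norm_le_norm_mul_of_mem this).trans
    (mul_le_mul_of_nonneg_right (hC t ht) (norm_nonneg _))

end bound

theorem aux_perm {r : ℕ} (a b : Fin r → ℂ)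
    (h : ∏ i : Fin r, (Polynomial.X - Polynomial.C (a i)) =
      ∏ i : Fin r, (Polynomial.X - Polynomial.C (b i))) :
    ∃ σ : Equiv.Perm (Fin r), b ∘ σ = a := by
  have h1 : ∀ c : Fin r → ℂ, (∏ i : Fin r, (Polynomial.X - Polynomial.C (c i))).roots =
      Finset.univ.val.map c := by
    intro c
    have := Polynomial.roots_multiset_prod_X_sub_C (Finset.univ.val.map c)
    rw [Multiset.map_map] at this
    exact this
  have h2 : Finset.univ.val.map a = Finset.univ.val.map b := by rw [← h1, ← h1, h]
  have h3 : ∀ z, Nonempty ({i // a i = z} ≃ {i // b i = z}) := by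
    intro z
    refine ⟨Fintype.equivOfCardEq ?_⟩
    have h4 := congrArg (Multiset.count z) h2
    rw [Multiset.count_map, Multiset.count_map] at h4
    simp only [Fintype.card_subtype]
    simpa [Finset.card_def, eq_comm] using h4
  have e := fun z => (h3 z).some
  exact ⟨Equiv.ofFiberEquiv e, funext fun i => Equiv.ofFiberEquiv_map e i⟩

theorem aux_exists {r : ℕ} (A : Matrix (Fin r) (Fin r) ℂ) :
    ∃ a : Fin r → ℂ, A.charpoly = ∏ i : Fin r, (Polynomial.X - Polynomial.C (a i)) := by
  have hs := (IsAlgClosed.splits A.charpoly).eq_prod_roots_of_monic A.charpoly_monic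
  have hcard : A.charpoly.roots.toList.length = r := by
    rw [Multiset.length_toList, ← (IsAlgClosed.splits A.charpoly).natDegree_eq_card_roots,
      Matrix.charpoly_natDegree_eq_dim, Fintype.card_fin]
  refine ⟨fun i => A.charpoly.roots.toList.get (i.cast hcard.symm), ?_⟩
  conv_lhs => rw [hs, ← Multiset.coe_toList A.charpoly.roots]
  generalize A.charpoly.roots.toList = l at hcard
  subst hcard
  rw [Multiset.map_coe, Multiset.prod_coe]
  simpa using (Fin.prod_univ_fun_getElem l (fun x => Polynomial.X - Polynomial.C x)).symm

/-- continuous selection of eigenvalues. If `t ↦ X t` is a continuous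
family of `r × r` complex matrices on `[0,1]`, then there are continuous functions
`λ_1,…,λ_r` on `[0,1]` which at each `t` are the eigenvalues of `X t` with algebraic
multiplicity, i.e. the characteristic polynomial factors as `∏ i (u − λ_i(t))`. -/
theorem continuous_eigenvalue_selection (r : ℕ)
    (X : ℝ → Matrix (Fin r) (Fin r) ℂ)
    (hX : ContinuousOn X (Set.Icc (0 : ℝ) 1)) :
    ∃ lam : Fin r → ℝ → ℂ,
      (∀ i, ContinuousOn (lam i) (Set.Icc (0 : ℝ) 1)) ∧
      ∀ t ∈ Set.Icc (0 : ℝ) 1,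
        (X t).charpoly = ∏ i : Fin r, (Polynomial.X - Polynomial.C (lam i t)) := by
  let c : ℝ → ℝ := fun t => (Set.projIcc (0:ℝ) 1 zero_le_one t : ℝ)
  have hc : Continuous c := continuous_subtype_val.comp continuous_projIcc
  have hcmem : ∀ t, c t ∈ Set.Icc (0:ℝ) 1 := fun t => (Set.projIcc (0:ℝ) 1 zero_le_one t).2
  have hcid : ∀ t ∈ Set.Icc (0:ℝ) 1, c t = t := fun t ht => by
    simp only [c]; rw [Set.projIcc_of_mem _ ht]
  let Y : ℝ → Matrix (Fin r) (Fin r) ℂ := fun t => X (c t)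
  have hY : Continuous Y := hX.comp_continuous hc hcmem
  have hYc : ∀ t, Y (c t) = Y t := fun t => by
    simp only [Y]; rw [hcid _ (hcmem t)]
  let R : ℝ → (Fin r → ℂ) → Prop := fun t a =>
    (Y t).charpoly = ∏ i : Fin r, (Polynomial.X - Polynomial.C (a i))
  have hRc : ∀ t a, R (c t) a ↔ R t a := fun t a => by simp only [R, hYc]
  have hex : ∀ t, ∃ a, R t a := fun t => aux_exists (Y t)
  have hcl : IsClosed {p : ℝ × (Fin r → ℂ) | R p.1 p.2} := by
    have : {p : ℝ × (Fin r → ℂ) | R p.1 p.2} =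
        ⋂ z : ℂ, {p | (Matrix.scalar (Fin r) z - Y p.1).det = ∏ i : Fin r, (z - p.2 i)} := by
      ext p
      simp only [Set.mem_ofPred_eq, Set.mem_iInter, R]
      constructor
      · intro h z
        rw [← Matrix.eval_charpoly, h, Polynomial.eval_prod]
        simp
      · intro h
        apply Polynomial.funext
        intro z
        rw [Matrix.eval_charpoly, h, Polynomial.eval_prod]
        simp
    rw [this]
    refine isClosed_iInter fun z => isClosed_eq ?_ ?_
    · exact Continuous.matrix_det (continuous_const.sub (hY.comp continuous_fst))
    · fun_prop
  obtain ⟨M, hM0⟩ := aux_bound Y hY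
  have hM : ∀ t a, R t a → ‖a‖ ≤ M := fun t a h => hM0 (c t) (hcmem t) a ((hRc t a).2 h)
  have hperm : ∀ t a b, R t a → R t b → ∃ σ : Equiv.Perm (Fin r), b ∘ σ = a :=
    fun t a b ha hb => aux_perm a b (ha.symm.trans hb)
  have hsymm : ∀ t b (σ : Equiv.Perm (Fin r)), R t b → R t (b ∘ σ) := by
    intro t b σ h
    simp only [R] at h ⊢
    rw [h]
    exact (Equiv.prod_comp σ (fun i => Polynomial.X - Polynomial.C (b i))).symm
  obtain ⟨L, hLc, hL⟩ := aux_select R hex hcl M hM hperm (by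
    intro ε hε
    obtain ⟨δ, hδ, h⟩ := aux_match R hex hcl M hM hperm hsymm ε hε
    refine ⟨δ, hδ, fun s t hst a ha => ?_⟩
    obtain ⟨b, hb, hd⟩ := h (c s) (hcmem s) (c t) (hcmem t)
      (lt_of_le_of_lt (Set.abs_projIcc_sub_projIcc zero_le_one) hst) a ((hRc s a).2 ha)
    exact ⟨b, (hRc t b).1 hb, hd⟩)
  refine ⟨fun i t => L t i, fun i => ?_, fun t ht => ?_⟩
  · exact (continuous_apply i).comp_continuousOn hLc
  · have := hL t ht
    simp only [R, Y] at this
    rwa [hcid t ht] at this
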